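/- Let p be a prime number and let H₁ and H₂ be nonzero abelian p-groups. Then the first Tor group Tor₁^ℤ(H₁, H₂) is nonzero. -/

import Mathlib

open CategoryTheory

/-!
Choose `x ∈ H₁` and `y ∈ H₂` nonzero and killed by `p`, and a projective resolution
`⋯ → X₂ → X₁ → X₀ → H₂` with differentials `d₂ : X₂ → X₁` and `d₁ : X₁ → X₀`. Then
`Tor₁(H₁, H₂)` is the homology of `H₁ ⊗ X₂ → H₁ ⊗ X₁ → H₁ ⊗ X₀`, and it contains an explicit
nonzero class. Lift `y` to `f ∈ X₀`; since `p • y = 0`, exactness gives `q ∈ X₁` with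
`d₁ q = p • f`. The element `x ⊗ q` is a cycle, because
`x ⊗ p • f = p • x ⊗ f = 0`.

Let `K ⊆ X₀` be the image of `d₁`. The map `H₁ ⊗ X₁ → H₁ ⊗ K` kills boundaries and sends `x ⊗ q`
to `x ⊗ p • f`, so it is enough that the latter is nonzero. As a submodule of a projective module
over a PID, `K` is torsion-free, hence flat, so the inclusion `ℤ/p ≅ ℤ x ⊆ H₁` induces an injection
`K / p K ≅ ℤ/p ⊗ K → H₁ ⊗ K` (`tmul_ne_zero_of_prime`). Finally `p • f ∉ p K`: since `X₀` is
torsion-free, otherwise `f ∈ K`, i.e. `y = 0`.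

The module-theoretic part (`exists_cycle_not_boundary`) is carried out over an arbitrary PID.
-/

open TensorProduct

lemma exists_ne_zero_smul_eq_zero {H : Type*} [AddCommGroup H] [Nontrivial H] (p : ℕ)
    (h : ∀ x : H, ∃ k : ℕ, p ^ k • x = 0) : ∃ x : H, x ≠ 0 ∧ (p : ℤ) • x = 0 := by
  classical
  obtain ⟨x, hx⟩ := exists_ne (0 : H)
  have hk := Nat.find_spec (h x)
  have hmin := fun m => Nat.find_min (h x) (m := m)
  generalize Nat.find (h x) = k at hk hmin
  cases k with
  | zero => simp [hx] at hk
  | succ n =>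
    refine ⟨p ^ n • x, hmin n n.lt_succ_self, ?_⟩
    rw [natCast_zsmul, smul_smul, ← pow_succ', hk]

section PID

variable {R : Type*} [CommRing R] [IsDomain R] [IsPrincipalIdealRing R]

/-- If `x` generates a copy of `R ⧸ (p)` in `M` and `K` is flat, then `R ⧸ (p) ⊗ K ≅ K ⧸ p K`
embeds in `M ⊗ K` through `k ↦ x ⊗ k`. -/
lemma tmul_ne_zero_of_prime {M K : Type*} [AddCommGroup M] [AddCommGroup K] [Module R M]
    [Module R K] [Module.Flat R K]
    {p : R} (hp : Prime p) {x : M} (hx : x ≠ 0) (hpx : p • x = 0) {k : K}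
    (hk : ∀ k' : K, p • k' ≠ k) : x ⊗ₜ[R] k ≠ 0 := by
  let I : Ideal R := Ideal.span {p}
  have hI : I ≤ LinearMap.ker (LinearMap.toSpanSingleton R M x) := by
    rw [Ideal.span_singleton_le_iff_mem]
    simpa using hpx
  let φ : (R ⧸ I) →ₗ[R] M := Submodule.liftQ I (LinearMap.toSpanSingleton R M x) hI
  have hmax : I.IsMaximal := PrincipalIdealRing.isMaximal_of_irreducible hp.irreducible
  have hφ : Function.Injective φ := by
    rw [← LinearMap.ker_eq_bot]
    apply Submodule.ker_liftQ_eq_bot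
    -- the annihilator of `x` is a proper ideal containing the maximal ideal `I`
    refine (hmax.eq_of_le (fun h => hx ?_) hI).ge
    have : (1 : R) ∈ LinearMap.ker (LinearMap.toSpanSingleton R M x) := h ▸ Submodule.mem_top
    simpa using this
  have hinj := Module.Flat.rTensor_preserves_injective_linearMap (M := K) φ hφ
  intro h0
  have h1 : φ.rTensor K ((1 : R ⧸ I) ⊗ₜ[R] k) = 0 := by
    have : φ 1 = x := by
      change LinearMap.toSpanSingleton R M x 1 = x
      simp
    rw [LinearMap.rTensor_tmul, this, h0]
  have h2 := (map_eq_zero_iff _ hinj).mp h1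
  have h3 := congrArg (TensorProduct.quotTensorEquivQuotSMul K I) h2
  rw [← map_one (Ideal.Quotient.mk I), TensorProduct.quotTensorEquivQuotSMul_mk_tmul, one_smul,
    map_zero, Submodule.Quotient.mk_eq_zero, Submodule.ideal_span_singleton_smul,
    Submodule.mem_smul_pointwise_iff_exists] at h3
  obtain ⟨m, -, hm⟩ := h3
  exact hk m hm

/-- For a complex `X₂ → X₁ → X₀ → B → 0`, exact at `X₀` and `B` and with `X₀` torsion-free, the
complex `A ⊗ X₂ → A ⊗ X₁ → A ⊗ X₀` is not exact as soon as `A` and `B` both have nonzero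
`p`-torsion. -/
lemma exists_cycle_not_boundary {A B X₀ X₁ X₂ : Type*} [AddCommGroup A] [AddCommGroup B]
    [AddCommGroup X₀] [AddCommGroup X₁] [AddCommGroup X₂] [Module R A] [Module R B]
    [Module R X₀] [Module R X₁] [Module R X₂] [Module.IsTorsionFree R X₀]
    (d₂ : X₂ →ₗ[R] X₁) (d₁ : X₁ →ₗ[R] X₀) (π : X₀ →ₗ[R] B) (hπ : Function.Surjective π)
    (hdd : d₁ ∘ₗ d₂ = 0) (hex : Function.Exact d₁ π) {p : R} (hp : Prime p)
    {x : A} (hx : x ≠ 0) (hpx : p • x = 0) {y : B} (hy : y ≠ 0) (hpy : p • y = 0) :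
    ∃ t : A ⊗[R] X₁, d₁.lTensor A t = 0 ∧ ∀ s, d₂.lTensor A s ≠ t := by
  obtain ⟨f, rfl⟩ := hπ y
  obtain ⟨q, hq⟩ := (hex (p • f)).mp (by rw [map_smul, hpy])
  refine ⟨x ⊗ₜ q, ?_, fun s hs => ?_⟩
  · rw [LinearMap.lTensor_tmul, hq, TensorProduct.tmul_smul, TensorProduct.smul_tmul', hpx,
      TensorProduct.zero_tmul]
  refine tmul_ne_zero_of_prime hp hx hpx (k := d₁.rangeRestrict q) ?_ ?_
  · rintro ⟨_, ⟨r, rfl⟩⟩ hk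
    have h : p • d₁ r = d₁ q := congrArg Subtype.val hk
    rw [hq] at h
    have hrf : d₁ r = f := smul_right_injective X₀ hp.ne_zero h
    exact hy ((hex f).mpr ⟨r, hrf⟩)
  · have : d₁.rangeRestrict ∘ₗ d₂ = 0 :=
      LinearMap.ext fun z => Subtype.ext (LinearMap.congr_fun hdd z)
    have h := LinearMap.lTensor_comp_apply A d₁.rangeRestrict d₂ s
    rwa [this, LinearMap.lTensor_zero, hs, LinearMap.lTensor_tmul, LinearMap.zero_apply,
      eq_comm] at h

end PID

/-- for a prime `p` and nonzero abelian `p`-groups `H₁, H₂`,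
`Tor₁^ℤ(H₁, H₂)` is nonzero. -/
theorem tor_ne_zero_of_pGroups
    (p : ℕ) (hp : p.Prime)
    (H₁ H₂ : Type) [AddCommGroup H₁] [AddCommGroup H₂]
    [Nontrivial H₁] [Nontrivial H₂]
    (h1 : ∀ x : H₁, ∃ k : ℕ, p ^ k • x = 0)
    (h2 : ∀ x : H₂, ∃ k : ℕ, p ^ k • x = 0) :
    Nontrivial (((Tor (ModuleCat ℤ) 1).obj (ModuleCat.of ℤ H₁)).obj
      (ModuleCat.of ℤ H₂)) := by
  obtain ⟨x, hx, hpx⟩ := exists_ne_zero_smul_eq_zero p h1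
  obtain ⟨y, hy, hpy⟩ := exists_ne_zero_smul_eq_zero p h2
  by_contra hnt
  rw [not_nontrivial_iff_subsingleton] at hnt
  let P := projectiveResolution (ModuleCat.of ℤ H₂)
  let F := (MonoidalCategory.tensoringLeft (ModuleCat ℤ)).obj (ModuleCat.of ℤ H₁)
  have hz : Limits.IsZero ((F.leftDerived 1).obj (ModuleCat.of ℤ H₂)) :=
    @ModuleCat.isZero_of_subsingleton _ _ _ hnt
  have hzero := hz.of_iso (P.isoLeftDerivedObj F 1).symm
  -- vanishing of `Tor₁` means that `H₁ ⊗ P` is exact in degree one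
  have hex := (HomologicalComplex.exactAt_iff_isZero_homology _ _).mpr hzero
  rw [HomologicalComplex.exactAt_iff' _ 2 1 0 (by simp) (by simp),
    ShortComplex.moduleCat_exact_iff] at hex
  have hπ : Function.Surjective (P.π.f 0).hom :=
    (ModuleCat.epi_iff_surjective (P.π.f 0)).mp inferInstance
  have hdd : (P.complex.d 1 0).hom ∘ₗ (P.complex.d 2 1).hom = 0 :=
    congrArg ModuleCat.Hom.hom (P.complex.d_comp_d 2 1 0)
  have hex₀ : Function.Exact (P.complex.d 1 0).hom (P.π.f 0).hom :=
    (ShortComplex.ShortExact.moduleCat_exact_iff_function_exact _).mp P.exact₀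
  have : Module.Projective ℤ (P.complex.X 0) :=
    (IsProjective.iff_projective _).mpr (P.projective 0)
  obtain ⟨t, ht, hts⟩ := exists_cycle_not_boundary (A := H₁) (P.complex.d 2 1).hom
    (P.complex.d 1 0).hom (P.π.f 0).hom hπ hdd hex₀ (Nat.prime_iff_prime_int.mp hp)
    hx hpx hy hpy
  obtain ⟨s, hs⟩ := hex t ht
  exact hts s hs
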